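/- arXiv:1712.02243 — 8 statements merged into one kernel-verified Lean document; each statement's English description precedes it below -/
import Mathlib

section
/- Let X be a metric space. For all subsets A,B ⊆ X with A not close to B there exist subsets C,D ⊆ X such that C ∩ D = ∅, A is not close to X∖C, and B is not close to X∖D. -/
/-!
Split `X` according to which of `A` and `B` is nearer: `C` consists of the points `x` for which
some `a ∈ A` is strictly closer to `x` than every point of `B`, and `D = Cᶜ`. If `x ∉ C` is within
`R` of `a ∈ A`, then some `b ∈ B` is within `R` of `x`, hence within `2R` of `a`; since `A × B` is a
coentourage, `a` lies in a bounded set depending only on `R`, and so does `x`. This is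
`IsCoentourage.prod_of_nearer`; the other half is the same argument with `A` and `B` exchanged.
-/

open Set

variable {X Y : Type*}

/-- A set `E ⊆ X × X` is an entourage if `sup_{(x,y) ∈ E} d(x,y) < ∞`. -/
def IsEntourage [MetricSpace X] (E : Set (X × X)) : Prop :=
  ∃ C : ℝ, ∀ p ∈ E, dist p.1 p.2 ≤ C

/-- A set `B ⊆ X` is bounded if `B × B` is an entourage. -/
def IsBoundedSet [MetricSpace X] (B : Set X) : Prop :=
  IsEntourage (B ×ˢ B)

/-- A set `C ⊆ X × X` is a coentourage if for every entourage `E` there is a bounded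
set `B` with `E ∩ C ⊆ B × B`. -/
def IsCoentourage [MetricSpace X] (C : Set (X × X)) : Prop :=
  ∀ E : Set (X × X), IsEntourage E → ∃ B : Set X, IsBoundedSet B ∧ E ∩ C ⊆ B ×ˢ B

/-- `A` and `B` are close (`A ≬ B`) if `A × B` is not a coentourage. -/
def CloseSets [MetricSpace X] (A B : Set X) : Prop :=
  ¬ IsCoentourage (A ×ˢ B)

/-- `E[A] = {y : (x,y) ∈ E for some x ∈ A}`. -/
def entImage (E : Set (X × X)) (A : Set X) : Set X :=
  {y | ∃ x ∈ A, (x, y) ∈ E}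

/-- A finite family `U i` of subsets of `X` is a coarse cover of `X` if
`(X × X) ∖ ⋃ i, U i × U i` is a coentourage. -/
def IsCoarseCover [MetricSpace X] {ι : Type*} (U : ι → Set X) : Prop :=
  IsCoentourage ((⋃ i, U i ×ˢ U i)ᶜ)

/-- The coarse star `st(S, 𝒰) = ⋃ {Uᵢ : S ≬ Uᵢ}`. -/
def coarseStar [MetricSpace X] {ι : Type*} (S : Set X) (U : ι → Set X) : Set X :=
  ⋃ i ∈ {i | CloseSets S (U i)}, U i

/-- `𝒱` coarsely star refines `𝒰` if for every `j` there are an `i` and an entourage `E`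
with `st(Vⱼ, 𝒱) ⊆ E[Uᵢ]`. -/
def IsCoarseStarRefinement [MetricSpace X] {ι κ : Type*} (V : κ → Set X) (U : ι → Set X) : Prop :=
  ∀ j, ∃ i, ∃ E : Set (X × X), IsEntourage E ∧ coarseStar (V j) V ⊆ entImage E (U i)

/-- `f : X → Y` is a coarse map if it maps entourages to entourages and preimages of
bounded sets are bounded. -/
def IsCoarseMap [MetricSpace X] [MetricSpace Y] (f : X → Y) : Prop :=
  (∀ E : Set (X × X), IsEntourage E → IsEntourage (Prod.map f f '' E)) ∧
  (∀ A : Set Y, IsBoundedSet A → IsBoundedSet (f ⁻¹' A))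

/-- Two maps `f g : X → Y` are close if `{(f x, g x) : x ∈ X}` is an entourage of `Y`. -/
def CloseMaps [MetricSpace X] [MetricSpace Y] (f g : X → Y) : Prop :=
  IsEntourage (Set.range fun x => (f x, g x))

/-- Two coarse maps `φ ψ : ℕ → X` represent the same endpoint of `X` if there is an
entourage `E` of `X` with `E[ψ(ℕ)] = φ(ℕ)`. -/
def SameEnd [MetricSpace X] (φ ψ : ℕ → X) : Prop :=
  ∃ E : Set (X × X), IsEntourage E ∧ entImage E (Set.range ψ) = Set.range φ

/-- For endpoints `p, q` represented by `φ, ψ`, `q ∈ 𝒰[p]` means there is an entourage `E`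
with `ψ(ℕ) ⊆ E[st(φ(ℕ), 𝒰)]` and `φ(ℕ) ⊆ E[st(ψ(ℕ), 𝒰)]`. -/
def inUNbhd [MetricSpace X] {ι : Type*} (U : ι → Set X) (φ ψ : ℕ → X) : Prop :=
  ∃ E : Set (X × X), IsEntourage E ∧
    Set.range ψ ⊆ entImage E (coarseStar (Set.range φ) U) ∧
    Set.range φ ⊆ entImage E (coarseStar (Set.range ψ) U)

theorem IsCoentourage.prod_swap [MetricSpace X] {A B : Set X} (h : IsCoentourage (A ×ˢ B)) :
    IsCoentourage (B ×ˢ A) := by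
  rintro E ⟨R, hR⟩
  obtain ⟨K, hK, hsub⟩ := h (Prod.swap ⁻¹' E)
    ⟨R, fun p hp => by simpa [dist_comm] using hR p.swap hp⟩
  refine ⟨K, hK, ?_⟩
  rintro ⟨b, a⟩ ⟨hE, hb, ha⟩
  have := @hsub (a, b) ⟨hE, ha, hb⟩
  exact ⟨this.2, this.1⟩

/-- If `A` and `B` are coarsely disjoint and no point of `S` is strictly closer to a point of `A`
than to all of `B`, then `A` and `S` are coarsely disjoint. -/
theorem IsCoentourage.prod_of_nearer [MetricSpace X] {A B S : Set X}
    (h : IsCoentourage (A ×ˢ B)) (hS : ∀ x ∈ S, ∀ a ∈ A, ∃ b ∈ B, dist x b ≤ dist x a) :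
    IsCoentourage (A ×ˢ S) := by
  rintro E ⟨R, hR⟩
  obtain ⟨K, ⟨M, hM⟩, hsub⟩ := h {p | dist p.1 p.2 ≤ 2 * R} ⟨2 * R, fun p hp => hp⟩
  refine ⟨{y | ∃ z ∈ K, dist z y ≤ R}, ⟨M + 2 * R, ?_⟩, ?_⟩
  · rintro ⟨y, y'⟩ ⟨⟨z, hz, hzy⟩, ⟨z', hz', hzy'⟩⟩
    have h1 : dist z z' ≤ M := hM (z, z') ⟨hz, hz'⟩
    have h2 := dist_triangle4 y z z' y'
    rw [dist_comm y z] at h2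
    change dist y y' ≤ _
    linarith
  · rintro ⟨a, x⟩ ⟨hE, ha, hx⟩
    have hax : dist a x ≤ R := hR _ hE
    obtain ⟨b, hb, hxb⟩ := hS x hx a ha
    rw [dist_comm x a] at hxb
    have hab : dist a b ≤ 2 * R := by linarith [dist_triangle a x b]
    have haK : a ∈ K := (@hsub (a, b) ⟨hab, ha, hb⟩).1
    exact ⟨⟨a, haK, by simpa using dist_nonneg.trans hax⟩, ⟨a, haK, hax⟩⟩

/-- separation of coarsely disjoint sets. -/
theorem exists_separating_sets [MetricSpace X] (A B : Set X) (h : ¬ CloseSets A B) :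
    ∃ C D : Set X, C ∩ D = ∅ ∧ ¬ CloseSets A Cᶜ ∧ ¬ CloseSets B Dᶜ := by
  have hAB : IsCoentourage (A ×ˢ B) := not_not.mp h
  let C : Set X := {x | ∃ a ∈ A, ∀ b ∈ B, dist x a < dist x b}
  refine ⟨C, Cᶜ, Set.inter_compl_self C, not_not.mpr ?_, not_not.mpr ?_⟩
  · refine hAB.prod_of_nearer fun x hx a ha => ?_
    by_contra! hcon
    exact hx ⟨a, ha, hcon⟩
  · rw [compl_compl]
    refine hAB.prod_swap.prod_of_nearer ?_
    rintro x ⟨a, ha, hlt⟩ b hb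
    exact ⟨a, ha, (hlt b hb).le⟩
end

section
/- If U₁, U₂ coarsely cover a metric space X (equivalently, the complements of U₁ and U₂ are coarsely disjoint), then there exists a coarse cover V₁, V₂ of X such that V₁ is not close to the complement of U₁ and V₂ is not close to the complement of U₂. -/
/-! Write `A = U₁ᶜ`, `B = U₂ᶜ` and let `a`, `b` be the distance functions to `A` and `B`. Since
`A` and `B` are coarsely disjoint, the points at distance at most `R` from both `A` and `B` form a
bounded set for every `R` (`isBoundedSet_near_both`); hence a set of pairs is a coentourage as soon
as its pairs at distance at most `R` consist of points with `a, b ≤ 4 R`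
(`isCoentourage_of_near_both`). The cover is `V₁ = {b < 3 a}`, `V₂ = {a < 3 b}`.
A point of `V₁` that is `R`-close to `A` has `a ≤ R` and `b < 3 R`, and symmetrically for `V₂`.
If `u ∉ V₁` and `v ∉ V₂` are `R`-close, then `3 a(u) ≤ b(u)` and `3 b(v) ≤ a(v)`, which with the
Lipschitz bounds forces `a(u), b(v) ≤ R / 2`. The factor `3`, rather than `1`, is what makes the
complements of `V₁` and `V₂` diverge. If `A` or `B` is empty, the cover by `X` and `∅` works. -/

open Set

variable {X Y : Type*}

/-- Points uniformly near to both `U₁ᶜ` and `U₂ᶜ` form a bounded set: each is near some point of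
`U₁ᶜ` that is itself near `U₂ᶜ`, and such points are confined by coarse disjointness. -/
lemma isBoundedSet_near_both [MetricSpace X] {U₁ U₂ : Set X} (h : IsCoarseCover ![U₁, U₂])
    (h₁ : U₁ᶜ.Nonempty) (h₂ : U₂ᶜ.Nonempty) (R : ℝ) :
    IsBoundedSet {x | Metric.infDist x U₁ᶜ ≤ R ∧ Metric.infDist x U₂ᶜ ≤ R} := by
  obtain ⟨S, ⟨C, hC⟩, hS⟩ := h {p | dist p.1 p.2 ≤ 2 * (R + 1)} ⟨_, fun p hp => hp⟩
  have key : ∀ x, Metric.infDist x U₁ᶜ ≤ R → Metric.infDist x U₂ᶜ ≤ R →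
      ∃ s ∈ S, dist x s < R + 1 := by
    intro x ha hb
    obtain ⟨s, hs, hxs⟩ := (Metric.infDist_lt_iff h₁).1 (ha.trans_lt (lt_add_one R))
    obtain ⟨t, ht, hxt⟩ := (Metric.infDist_lt_iff h₂).1 (hb.trans_lt (lt_add_one R))
    have hst : (s, t) ∈ S ×ˢ S := by
      refine hS ⟨?_, ?_⟩
      · have := dist_triangle_left s t x
        simp only [mem_ofPred_eq]
        linarith
      · simp only [mem_compl_iff] at hs ht
        simp [hs, ht]
    exact ⟨s, hst.1, hxs⟩
  refine ⟨C + 2 * (R + 1), ?_⟩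
  rintro ⟨x, y⟩ ⟨⟨hxa, hxb⟩, hya, hyb⟩
  obtain ⟨s, hs, hxs⟩ := key x hxa hxb
  obtain ⟨t, ht, hyt⟩ := key y hya hyb
  have h1 := hC (s, t) ⟨hs, ht⟩
  have h2 := dist_triangle4_right x y s t
  simp only at h1 h2 ⊢
  linarith

lemma isCoentourage_of_near_both [MetricSpace X] {U₁ U₂ : Set X} (h : IsCoarseCover ![U₁, U₂])
    (h₁ : U₁ᶜ.Nonempty) (h₂ : U₂ᶜ.Nonempty) {D : Set (X × X)}
    (hD : ∀ x y R, (x, y) ∈ D → dist x y ≤ R →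
      (Metric.infDist x U₁ᶜ ≤ 4 * R ∧ Metric.infDist x U₂ᶜ ≤ 4 * R) ∧
      (Metric.infDist y U₁ᶜ ≤ 4 * R ∧ Metric.infDist y U₂ᶜ ≤ 4 * R)) :
    IsCoentourage D := by
  rintro E ⟨R, hR⟩
  refine ⟨_, isBoundedSet_near_both h h₁ h₂ (4 * R), ?_⟩
  rintro ⟨x, y⟩ ⟨hE, hxy⟩
  exact hD x y R hxy (hR _ hE)

lemma isCoentourage_empty [MetricSpace X] : IsCoentourage (∅ : Set (X × X)) :=
  fun _ _ => ⟨∅, ⟨0, by simp⟩, by simp⟩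

/-- separation cover. -/
theorem separation_cover [MetricSpace X] (U₁ U₂ : Set X)
    (h : IsCoarseCover ![U₁, U₂]) :
    ∃ V₁ V₂ : Set X, IsCoarseCover ![V₁, V₂] ∧
      ¬ CloseSets V₁ U₁ᶜ ∧ ¬ CloseSets V₂ U₂ᶜ := by
  -- `Metric.infDist` to the empty set is `0`, so empty complements are treated apart.
  rcases U₁ᶜ.eq_empty_or_nonempty with h₁ | h₁
  · refine ⟨univ, ∅, ?_, ?_, ?_⟩
    · have : (⋃ i, (![univ, ∅] : Fin 2 → Set X) i ×ˢ (![univ, ∅] : Fin 2 → Set X) i)ᶜ = ∅ := by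
        ext; simp
      rw [IsCoarseCover, this]
      exact isCoentourage_empty
    · simpa [CloseSets, h₁] using isCoentourage_empty
    · simpa [CloseSets] using isCoentourage_empty
  rcases U₂ᶜ.eq_empty_or_nonempty with h₂ | h₂
  · refine ⟨∅, univ, ?_, ?_, ?_⟩
    · have : (⋃ i, (![∅, univ] : Fin 2 → Set X) i ×ˢ (![∅, univ] : Fin 2 → Set X) i)ᶜ = ∅ := by
        ext; simp
      rw [IsCoarseCover, this]
      exact isCoentourage_empty
    · simpa [CloseSets] using isCoentourage_empty
    · simpa [CloseSets, h₂] using isCoentourage_empty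
  have lip : ∀ (W : Set X) (x y : X) (R : ℝ), dist x y ≤ R →
      Metric.infDist x W ≤ Metric.infDist y W + R ∧
      Metric.infDist y W ≤ Metric.infDist x W + R := by
    intro W x y R hR
    have h1 := Metric.infDist_le_infDist_add_dist (s := W) (x := x) (y := y)
    have h2 := Metric.infDist_le_infDist_add_dist (s := W) (x := y) (y := x)
    rw [dist_comm y x] at h2
    exact ⟨by linarith, by linarith⟩
  refine ⟨{x | Metric.infDist x U₂ᶜ < 3 * Metric.infDist x U₁ᶜ},
    {x | Metric.infDist x U₁ᶜ < 3 * Metric.infDist x U₂ᶜ}, ?_, not_not.2 ?_, not_not.2 ?_⟩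
  · refine isCoentourage_of_near_both h h₁ h₂ fun x y R hxy hR => ?_
    have hR0 : 0 ≤ R := dist_nonneg.trans hR
    obtain ⟨a1, a2⟩ := lip U₁ᶜ x y R hR
    obtain ⟨b1, b2⟩ := lip U₂ᶜ x y R hR
    simp only [mem_compl_iff, mem_iUnion, mem_prod, Fin.exists_fin_two, not_or, not_and_or,
      Matrix.cons_val_zero, Matrix.cons_val_one, mem_ofPred_eq, not_lt] at hxy
    obtain ⟨hu | hu, hv | hv⟩ := hxy <;> refine ⟨⟨?_, ?_⟩, ?_, ?_⟩ <;> linarith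
  · refine isCoentourage_of_near_both h h₁ h₂ fun x y R hxy hR => ?_
    have hR0 : 0 ≤ R := dist_nonneg.trans hR
    obtain ⟨a1, a2⟩ := lip U₁ᶜ x y R hR
    obtain ⟨b1, b2⟩ := lip U₂ᶜ x y R hR
    have hx : Metric.infDist x U₂ᶜ < 3 * Metric.infDist x U₁ᶜ := hxy.1
    have hy : Metric.infDist y U₁ᶜ = 0 := Metric.infDist_zero_of_mem hxy.2
    refine ⟨⟨?_, ?_⟩, ?_, ?_⟩ <;> linarith
  · refine isCoentourage_of_near_both h h₁ h₂ fun x y R hxy hR => ?_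
    have hR0 : 0 ≤ R := dist_nonneg.trans hR
    obtain ⟨a1, a2⟩ := lip U₁ᶜ x y R hR
    obtain ⟨b1, b2⟩ := lip U₂ᶜ x y R hR
    have hx : Metric.infDist x U₁ᶜ < 3 * Metric.infDist x U₂ᶜ := hxy.1
    have hy : Metric.infDist y U₂ᶜ = 0 := Metric.infDist_zero_of_mem hxy.2
    refine ⟨⟨?_, ?_⟩, ?_, ?_⟩ <;> linarith
end

section
/- If 𝒱 = (Vⱼ)ⱼ is a coarse star refinement of a coarse cover 𝒰 = (Uᵢ)ᵢ of a metric space X, then for every subset S ⊆ X there is an entourage E ⊆ X×X such that st(st(S,𝒱),𝒱) ⊆ E[st(S,𝒰)]. -/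
/-!
If `V k` is close to `st(S, V)`, which is a finite union, then it is close to some `V j` with
`S ≬ V j` (`CloseSets.exists_of_iUnion`). A set close to another one is unbounded, hence close to
itself, so both `V j` and `V k` lie in `st(V j, V) ⊆ E[U i]` for the `i` and `E` given by the
refinement. Closeness passes from `E[U i]` to `U i` (`CloseSets.of_subset_entImage`), so
`S ≬ V j` gives `S ≬ U i`, and therefore `V k ⊆ E[U i] ⊆ E[st(S, U)]`. As there are only
finitely many `j`, one entourage serves them all.
-/

open Set

variable {X Y : Type*}

/-- For products, being a coentourage is boundedness of all the sets `{y ∈ B | d(x, y) ≤ R for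
some x ∈ A}`; the first coordinates are then controlled by the triangle inequality. -/
lemma isCoentourage_prod_iff [MetricSpace X] {A B : Set X} :
    IsCoentourage (A ×ˢ B) ↔
      ∀ R : ℝ, Bornology.IsBounded {y | y ∈ B ∧ ∃ x ∈ A, dist x y ≤ R} := by
  constructor
  · intro h R
    obtain ⟨T, ⟨C, hC⟩, hT⟩ := h {p | dist p.1 p.2 ≤ R} ⟨R, fun p hp => hp⟩
    refine Metric.isBounded_iff.2 ⟨C, ?_⟩
    rintro y ⟨hy, x, hx, hxy⟩ z ⟨hz, w, hw, hwz⟩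
    exact hC (y, z) ⟨(@hT (x, y) ⟨hxy, hx, hy⟩).2, (@hT (w, z) ⟨hwz, hw, hz⟩).2⟩
  · rintro h E ⟨R, hR⟩
    obtain ⟨C, hC⟩ := Metric.isBounded_iff.1 ((h R).thickening (δ := R + 1))
    refine ⟨_, ⟨C, fun p hp => hC hp.1 hp.2⟩, ?_⟩
    rintro ⟨x, y⟩ ⟨hE, hx, hy⟩
    have hxy : dist x y ≤ R := hR _ hE
    have h0 : 0 ≤ dist x y := dist_nonneg
    have hmem : y ∈ {y | y ∈ B ∧ ∃ x ∈ A, dist x y ≤ R} := ⟨hy, x, hx, hxy⟩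
    exact ⟨Metric.mem_thickening_iff.2 ⟨y, hmem, by linarith⟩,
      Metric.mem_thickening_iff.2 ⟨y, hmem, by rw [dist_self]; linarith⟩⟩

lemma CloseSets.self_right [MetricSpace X] {A B : Set X} (h : CloseSets A B) :
    CloseSets B B := by
  intro hB
  refine h (isCoentourage_prod_iff.2 fun R => ?_)
  -- The diagonal of `B × B` already forces `B` to be bounded.
  exact (isCoentourage_prod_iff.1 hB 0).subset fun y hy => ⟨hy.1, y, hy.1, by simp⟩

lemma CloseSets.of_subset_entImage [MetricSpace X] {A B D : Set X} {E : Set (X × X)}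
    (h : CloseSets A B) (hE : IsEntourage E) (hB : B ⊆ entImage E D) : CloseSets A D := by
  intro hD
  obtain ⟨C, hC⟩ := hE
  refine h (isCoentourage_prod_iff.2 fun R => ?_)
  refine ((isCoentourage_prod_iff.1 hD (R + C)).thickening (δ := C + 1)).subset ?_
  rintro y ⟨hy, x, hx, hxy⟩
  obtain ⟨u, hu, huy⟩ := hB hy
  have huy' : dist u y ≤ C := hC _ huy
  refine Metric.mem_thickening_iff.2 ⟨u, ⟨hu, x, hx, ?_⟩, ?_⟩
  · linarith [dist_triangle_right x u y]
  · rw [dist_comm]; linarith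

lemma CloseSets.exists_of_iUnion [MetricSpace X] {κ : Type*} [Finite κ] {J : Set κ}
    {V : κ → Set X} {B : Set X} (h : CloseSets (⋃ j ∈ J, V j) B) :
    ∃ j ∈ J, CloseSets (V j) B := by
  by_contra hcon
  refine h (isCoentourage_prod_iff.2 fun R => ?_)
  have hbdd : Bornology.IsBounded (⋃ j ∈ J, {y | y ∈ B ∧ ∃ x ∈ V j, dist x y ≤ R}) := by
    refine (Bornology.isBounded_biUnion (Set.toFinite J)).2 fun j hj => ?_
    exact isCoentourage_prod_iff.1 (by_contra fun hn => hcon ⟨j, hj, hn⟩) R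
  refine hbdd.subset ?_
  rintro y ⟨hy, x, hx, hxy⟩
  obtain ⟨j, hj, hxj⟩ := Set.mem_iUnion₂.1 hx
  exact Set.mem_iUnion₂.2 ⟨j, hj, hy, x, hxj, hxy⟩

lemma subset_coarseStar [MetricSpace X] {κ : Type*} {S : Set X} {V : κ → Set X} {k : κ}
    (h : CloseSets S (V k)) : V k ⊆ coarseStar S V :=
  fun _ hy => Set.mem_iUnion₂.2 ⟨k, h, hy⟩

/-- double coarse star of a coarse star refinement. -/
theorem coarseStar_coarseStar_subset [MetricSpace X] {ι κ : Type*} [Fintype ι] [Fintype κ]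
    (U : ι → Set X) (V : κ → Set X) (hU : IsCoarseCover U) (hV : IsCoarseCover V)
    (href : IsCoarseStarRefinement V U) (S : Set X) :
    ∃ E : Set (X × X), IsEntourage E ∧
      coarseStar (coarseStar S V) V ⊆ entImage E (coarseStar S U) := by
  choose i E hE hsub using href
  choose C hC using hE
  obtain ⟨M, hM⟩ := (Set.finite_range C).bddAbove
  refine ⟨⋃ j, E j, ⟨M, fun p hp => ?_⟩, fun y hy => ?_⟩
  · obtain ⟨j, hj⟩ := Set.mem_iUnion.1 hp
    exact (hC j p hj).trans (hM ⟨j, rfl⟩)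
  · obtain ⟨k, hk, hyk⟩ := Set.mem_iUnion₂.1 hy
    obtain ⟨j, hSj, hjk⟩ := CloseSets.exists_of_iUnion hk
    have hSU : CloseSets S (U (i j)) :=
      CloseSets.of_subset_entImage hSj ⟨C j, hC j⟩
        ((subset_coarseStar (CloseSets.self_right hSj)).trans (hsub j))
    obtain ⟨x, hx, hxy⟩ := hsub j (subset_coarseStar hjk hyk)
    exact ⟨x, subset_coarseStar hSU hx, Set.mem_iUnion.2 ⟨j, hxy⟩⟩
end

section
/- If f:X→Y is a coarse map between metric spaces, 𝒰 = (Uᵢ)ᵢ is a coarse cover of Y, and S ⊆ X is a subset, then f(st(S, f⁻¹𝒰)) ⊆ st(f(S), 𝒰), where f⁻¹𝒰 denotes the family (f⁻¹(Uᵢ))ᵢ. -/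
open Set

variable {X Y : Type*}

/-- Closeness is preserved by coarse maps: if `f(A) × B` is a coentourage, an entourage `E` of `X`
meets `A × f⁻¹(B)` inside the square of `f⁻¹(D)`, where `D` is a bounded set controlling the
intersection of `(f × f)(E)` with `f(A) × B`. -/
theorem CloseSets.image_of_preimage [MetricSpace X] [MetricSpace Y] {f : X → Y}
    (hf : IsCoarseMap f) {A : Set X} {B : Set Y} (h : CloseSets A (f ⁻¹' B)) :
    CloseSets (f '' A) B := by
  intro hco
  refine h fun E hE => ?_
  obtain ⟨D, hD, hsub⟩ := hco _ (hf.1 E hE)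
  refine ⟨f ⁻¹' D, hf.2 D hD, ?_⟩
  rintro ⟨x, y⟩ ⟨hxy, hx, hy⟩
  exact hsub ⟨mem_image_of_mem (Prod.map f f) hxy, mem_image_of_mem f hx, hy⟩

/-- image of the coarse star of a preimage cover. -/
theorem image_coarseStar_preimage_subset [MetricSpace X] [MetricSpace Y] {ι : Type*}
    [Fintype ι] (f : X → Y) (hf : IsCoarseMap f) (U : ι → Set Y) (hU : IsCoarseCover U)
    (S : Set X) :
    f '' coarseStar S (fun i => f ⁻¹' U i) ⊆ coarseStar (f '' S) U := by
  rintro _ ⟨x, hx, rfl⟩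
  simp only [coarseStar, mem_iUnion, mem_ofPred_eq] at hx ⊢
  obtain ⟨i, hi, hxi⟩ := hx
  exact ⟨i, hi.image_of_preimage hf, hxi⟩
end

section
/- Let X be a metric space and soe(X) its set of endpoints. The sets D_𝒰 = {(p,q) : q ∈ 𝒰[p]}, over all coarse covers 𝒰 of X, form a base for a uniformity on soe(X): (1) each D_𝒰 contains the diagonal; (2) for coarse covers 𝒰 = (Uᵢ)ᵢ and 𝒱 = (Vⱼ)ⱼ, the family 𝒰∩𝒱 = (Uᵢ∩Vⱼ)_{i,j} is a coarse cover with D_{𝒰∩𝒱} ⊆ D_𝒰 ∩ D_𝒱; (3) for every coarse cover 𝒰 there is a coarse cover 𝒱 with D_𝒱 ∘ D_𝒱 ⊆ D_𝒰; (4) D_𝒰 = D_𝒰⁻¹. -/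
/-!
Parts (1), (2) and (4) are formal: a set that is not close to `Uᵢ` meets `Uᵢ` in a bounded set,
finite unions of coentourages are coentourages, and the definition of `D_𝒰` is symmetric.

For (3), split `X` into the finitely many pieces `piece U S = {x | {i | x ∈ U i} = S}`, one for
each set `S` of indices. Since `U` is a coarse cover, two pieces with disjoint index sets are not
close (`inter_nonempty_of_close`). Two sets `A`, `B` that are not close can be separated by a
coarse cover by three sets, defined by comparing the distances to `A` and to `B`, which admits no
chain `A ≬ Vⱼ ≬ Vₖ ≬ B` (`exists_separating_cover`). Intersecting these covers over all pairs of
pieces gives a finite coarse cover `V` such that `piece U S ≬ Vⱼ ≬ Vₖ ≬ piece U S'` forces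
`piece U S ≬ piece U S'`, hence `S ∩ S' ≠ ∅` (`exists_chain_cover`).

If `ρ(ℕ) ⊆ E[st(φ(ℕ), V)]` and `ψ(ℕ) ⊆ E[st(ρ(ℕ), V)]`, then each point of `ψ(ℕ)` is near a point
`v` of some `Vⱼ` with `Vⱼ ≬ Vₖ ≬ φ(ℕ)`. Up to a bounded set of exceptions, the piece `S` of `v` is
close to `Vⱼ`, and `Vₖ` is close to `φ(ℕ) ∩ piece U S'` for some `S'`. An index `i ∈ S ∩ S'` then
satisfies `v ∈ Uᵢ` and `φ(ℕ) ≬ Uᵢ`, so `v ∈ st(φ(ℕ), U)` (`subset_star_of_chain`).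
-/

open Set

variable {X Y : Type*}

/-! ### Coentourages, closeness and coarse stars -/

section Basics

variable [MetricSpace X]

lemma isBoundedSet_iff {B : Set X} : IsBoundedSet B ↔ Bornology.IsBounded B := by
  rw [Metric.isBounded_iff]
  constructor
  · rintro ⟨C, hC⟩
    exact ⟨C, fun x hx y hy => hC (x, y) ⟨hx, hy⟩⟩
  · rintro ⟨C, hC⟩
    exact ⟨C, fun p hp => hC hp.1 hp.2⟩

lemma isCoentourage_iff {C : Set (X × X)} :
    IsCoentourage C ↔ ∀ R : ℝ, ∃ B : Set X, Bornology.IsBounded B ∧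
      ∀ x y, (x, y) ∈ C → dist x y ≤ R → x ∈ B ∧ y ∈ B := by
  constructor
  · intro h R
    obtain ⟨B, hB, hs⟩ := h {p | dist p.1 p.2 ≤ R} ⟨R, fun p hp => hp⟩
    exact ⟨B, isBoundedSet_iff.1 hB, fun x y hC hd => hs ⟨hd, hC⟩⟩
  · rintro h E ⟨R, hR⟩
    obtain ⟨B, hB, hs⟩ := h R
    exact ⟨B, isBoundedSet_iff.2 hB, fun p hp => hs p.1 p.2 hp.2 (hR p hp.1)⟩

/-- A set covered by finitely many coentourages is a coentourage. -/
lemma isCoentourage_of_cover {ι : Type*} [Finite ι] {C : Set (X × X)} {D : ι → Set (X × X)}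
    (hD : ∀ i, IsCoentourage (D i)) (hC : ∀ p ∈ C, ∃ i, p ∈ D i) : IsCoentourage C := by
  rw [isCoentourage_iff]
  intro R
  choose B hB hs using fun i => isCoentourage_iff.1 (hD i) R
  refine ⟨⋃ i, B i, Bornology.isBounded_iUnion.2 hB, fun x y hxy hd => ?_⟩
  obtain ⟨i, hi⟩ := hC _ hxy
  exact ⟨mem_iUnion.2 ⟨i, (hs i x y hi hd).1⟩, mem_iUnion.2 ⟨i, (hs i x y hi hd).2⟩⟩

lemma IsCoentourage.mono {C D : Set (X × X)} (hD : IsCoentourage D) (h : C ⊆ D) :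
    IsCoentourage C :=
  isCoentourage_of_cover (ι := Unit) (fun _ => hD) fun _ hp => ⟨(), h hp⟩

lemma CloseSets.mono {A A' B B' : Set X} (h : CloseSets A B) (hA : A ⊆ A') (hB : B ⊆ B') :
    CloseSets A' B' :=
  fun hc => h (hc.mono (prod_mono hA hB))

lemma CloseSets.symm {A B : Set X} (h : CloseSets A B) : CloseSets B A := by
  refine fun hc => h ?_
  rw [isCoentourage_iff] at hc ⊢
  intro R
  obtain ⟨W, hW, hs⟩ := hc R
  exact ⟨W, hW, fun x y hxy hd => (hs y x ⟨hxy.2, hxy.1⟩ (by rwa [dist_comm])).symm⟩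

/-- Closeness to a finite union is witnessed by one of its members. -/
lemma CloseSets.exists_of_cover {ι : Type*} [Finite ι] {A B : Set X} {D : ι → Set X}
    (h : CloseSets A B) (hB : ∀ b ∈ B, ∃ i, b ∈ D i) : ∃ i, CloseSets A (D i) := by
  by_contra hn
  simp only [CloseSets, not_exists, not_not] at hn
  refine h (isCoentourage_of_cover hn fun p hp => ?_)
  obtain ⟨i, hi⟩ := hB _ hp.2
  exact ⟨i, hp.1, hi⟩

lemma mem_coarseStar {ι : Type*} {S : Set X} {U : ι → Set X} {x : X} :
    x ∈ coarseStar S U ↔ ∃ i, CloseSets S (U i) ∧ x ∈ U i := by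
  simp [coarseStar]

lemma CloseSets.exists_of_star {ι : Type*} [Finite ι] {A P : Set X} {V : ι → Set X}
    (h : CloseSets A (coarseStar P V)) : ∃ k, CloseSets P (V k) ∧ CloseSets A (V k) := by
  obtain ⟨k, hk⟩ := h.exists_of_cover (D := fun k : {k // CloseSets P (V k)} => V k)
    (fun b hb => by
      obtain ⟨i, hi, hb⟩ := mem_coarseStar.1 hb
      exact ⟨⟨i, hi⟩, hb⟩)
  exact ⟨k, k.2, hk⟩

/-- Thickening a set does not make it close to more sets. -/
lemma CloseSets.of_thickening {A B B' : Set X} {C : ℝ} (h : CloseSets A B)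
    (hB : ∀ b ∈ B, ∃ b' ∈ B', dist b' b ≤ C) : CloseSets A B' := by
  refine fun hc => h ?_
  rw [isCoentourage_iff] at hc ⊢
  intro R
  obtain ⟨W, hW, hs⟩ := hc (R + C)
  refine ⟨Metric.cthickening C W ∪ W, hW.cthickening.union hW, fun x y hxy hd => ?_⟩
  obtain ⟨b', hb', hbd⟩ := hB y hxy.2
  have := hs x b' ⟨hxy.1, hb'⟩ (by
    have := dist_triangle x y b'
    rw [dist_comm y b'] at this
    linarith)
  exact ⟨Or.inr this.1, Or.inl
    (Metric.mem_cthickening_of_dist_le y b' C W this.2 (by rwa [dist_comm]))⟩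

lemma closeSets_of_not_isBounded_inter {A B : Set X} (h : ¬ Bornology.IsBounded (A ∩ B)) :
    CloseSets A B := by
  refine fun hc => h ?_
  obtain ⟨W, hW, hs⟩ := isCoentourage_iff.1 hc 0
  exact hW.subset fun x hx => (hs x x ⟨hx.1, hx.2⟩ (by simp)).1

lemma CloseSets.not_isBounded_left {A B : Set X} (h : CloseSets A B) :
    ¬ Bornology.IsBounded A := by
  refine fun hA => h (isCoentourage_iff.2 fun R => ?_)
  refine ⟨Metric.cthickening R A ∪ A, hA.cthickening.union hA, fun x y hxy hd => ?_⟩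
  exact ⟨Or.inr hxy.1, Or.inl
    (Metric.mem_cthickening_of_dist_le y x R A hxy.1 (by rwa [dist_comm]))⟩

/-- The image of a coarse map from `ℕ` is unbounded. -/
lemma IsCoarseMap.not_isBounded_range {φ : ℕ → X} (h : IsCoarseMap φ) :
    ¬ Bornology.IsBounded (range φ) := by
  intro hb
  obtain ⟨C, hC⟩ := h.2 _ (isBoundedSet_iff.2 hb)
  obtain ⟨n, hn⟩ := exists_nat_gt C
  have h1 := hC (n, 0) ⟨⟨n, rfl⟩, ⟨0, rfl⟩⟩
  rw [Nat.dist_eq] at h1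
  simp only [Nat.cast_zero, sub_zero] at h1
  linarith [le_abs_self (n : ℝ)]

/-- All but a bounded part of a set lies in its own coarse star. -/
lemma isBounded_diff_star {ι : Type*} [Finite ι] {U : ι → Set X} (hU : IsCoarseCover U)
    (P : Set X) : Bornology.IsBounded (P \ coarseStar P U) := by
  obtain ⟨W, hW, hs⟩ := isCoentourage_iff.1 hU 0
  -- Off `W` the `U i` cover `X`, and those that are not close to `P` meet it in bounded sets.
  have h2 : P \ coarseStar P U ⊆
      W ∪ ⋃ i : {i // Bornology.IsBounded (P ∩ U i)}, P ∩ U i := by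
    rintro x ⟨hxP, hx⟩
    by_cases hxU : ∃ i, x ∈ U i
    · obtain ⟨i, hi⟩ := hxU
      refine Or.inr (mem_iUnion.2 ⟨⟨i, ?_⟩, hxP, hi⟩)
      by_contra hb
      exact hx (mem_coarseStar.2 ⟨i, closeSets_of_not_isBounded_inter hb, hi⟩)
    · refine Or.inl (hs x x ?_ (by simp)).1
      simpa using hxU
  exact (hW.union (Bornology.isBounded_iUnion.2 fun i => i.2)).subset h2

lemma coarseStar_nonempty {ι : Type*} [Finite ι] {U : ι → Set X} (hU : IsCoarseCover U)
    {P : Set X} (hP : ¬ Bornology.IsBounded P) : (coarseStar P U).Nonempty := by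
  by_contra hn
  rw [not_nonempty_iff_eq_empty] at hn
  have := isBounded_diff_star hU P
  rw [hn, sdiff_empty] at this
  exact hP this

end Basics

/-! ### Separating two sets that are not close -/

section Separation

variable [MetricSpace X]

/-- Two sets that are not close have bounded common neighbourhoods. -/
lemma isBounded_common_nhd {A B : Set X} (h : IsCoentourage (A ×ˢ B)) (hA : A.Nonempty)
    (hB : B.Nonempty) (K : ℝ) :
    Bornology.IsBounded {x | Metric.infDist x A ≤ K ∧ Metric.infDist x B ≤ K} := by
  obtain ⟨W, hW, hs⟩ := isCoentourage_iff.1 h (2 * (K + 1))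
  refine (hW.cthickening (δ := K + 1)).subset ?_
  rintro x ⟨ha, hb⟩
  obtain ⟨u, hu, hxu⟩ := (Metric.infDist_lt_iff (r := K + 1) hA).1 (by linarith)
  obtain ⟨v, hv, hxv⟩ := (Metric.infDist_lt_iff (r := K + 1) hB).1 (by linarith)
  have h3 := dist_triangle_left u v x
  exact Metric.mem_cthickening_of_dist_le x u _ W (hs u v ⟨hu, hv⟩ (by linarith)).1 hxu.le

/-- Criterion for coentourages in terms of the distances to two sets that are not close. -/
lemma isCoentourage_of_infDist {A B : Set X} (h : IsCoentourage (A ×ˢ B)) (hA : A.Nonempty)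
    (hB : B.Nonempty) {C : Set (X × X)}
    (hC : ∀ R : ℝ, 0 ≤ R → ∃ K : ℝ, ∀ x y, (x, y) ∈ C →
      Metric.infDist x A ≤ Metric.infDist y A + R → Metric.infDist y A ≤ Metric.infDist x A + R →
      Metric.infDist x B ≤ Metric.infDist y B + R → Metric.infDist y B ≤ Metric.infDist x B + R →
      (Metric.infDist x A ≤ K ∧ Metric.infDist x B ≤ K) ∧
      (Metric.infDist y A ≤ K ∧ Metric.infDist y B ≤ K)) : IsCoentourage C := by
  rw [isCoentourage_iff]
  intro R
  obtain ⟨K, hK⟩ := hC (max R 0) (le_max_right _ _)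
  refine ⟨_, isBounded_common_nhd h hA hB K, fun x y hxy hd => ?_⟩
  have hd' : dist x y ≤ max R 0 := hd.trans (le_max_left _ _)
  have hd'' : dist y x ≤ max R 0 := by rwa [dist_comm]
  exact hK x y hxy
    (Metric.infDist_le_infDist_add_dist.trans (by gcongr))
    (Metric.infDist_le_infDist_add_dist.trans (by gcongr))
    (Metric.infDist_le_infDist_add_dist.trans (by gcongr))
    (Metric.infDist_le_infDist_add_dist.trans (by gcongr))

lemma isCoarseCover_univ {ι : Type*} [Nonempty ι] :
    IsCoarseCover (fun _ : ι => (univ : Set X)) := by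
  refine isCoentourage_iff.2 fun _ => ⟨∅, Bornology.isBounded_empty, fun x y hxy => ?_⟩
  simp at hxy

/-- Any two sets that are not close are separated by a coarse cover without a chain
`A ≬ Vⱼ ≬ Vₖ ≬ B`. The cover consists of the points nearer to `A`, the points at comparable
distances from `A` and `B`, and the points nearer to `B`; the constants make neighbouring sets
overlap enough. -/
lemma exists_separating_cover (A B : Set X) :
    ∃ V : Fin 3 → Set X, IsCoarseCover V ∧
      ∀ j k, CloseSets A (V j) → CloseSets (V j) (V k) → CloseSets (V k) B → CloseSets A B := by
  by_cases h : CloseSets A B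
  · exact ⟨fun _ => univ, isCoarseCover_univ, fun _ _ _ _ _ => h⟩
  rcases A.eq_empty_or_nonempty with rfl | hA
  · exact ⟨fun _ => univ, isCoarseCover_univ, fun _ _ h1 _ _ =>
      absurd Bornology.isBounded_empty h1.not_isBounded_left⟩
  rcases B.eq_empty_or_nonempty with rfl | hB
  · exact ⟨fun _ => univ, isCoarseCover_univ, fun _ _ _ _ h1 =>
      absurd Bornology.isBounded_empty h1.symm.not_isBounded_left⟩
  have hc : IsCoentourage (A ×ˢ B) := not_not.1 h
  set a : X → ℝ := fun x => Metric.infDist x A with ha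
  set b : X → ℝ := fun x => Metric.infDist x B with hb
  have ha0 : ∀ x, 0 ≤ a x := fun x => Metric.infDist_nonneg
  have hb0 : ∀ x, 0 ≤ b x := fun x => Metric.infDist_nonneg
  have hAz : ∀ x ∈ A, a x = 0 := fun x hx => Metric.infDist_zero_of_mem hx
  have hBz : ∀ x ∈ B, b x = 0 := fun x hx => Metric.infDist_zero_of_mem hx
  have hAfar : ¬ CloseSets A {x | b x ≤ 4 * a x} := by
    refine not_not.2 (isCoentourage_of_infDist hc hA hB fun R hR => ⟨10 * R, ?_⟩)
    rintro x y ⟨hx, hy⟩ h1 h2 h3 h4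
    change (a x ≤ _ ∧ b x ≤ _) ∧ (a y ≤ _ ∧ b y ≤ _)
    have := hAz x hx
    change b y ≤ 4 * a y at hy
    change a x ≤ a y + R at h1
    change a y ≤ a x + R at h2
    change b x ≤ b y + R at h3
    refine ⟨⟨?_, ?_⟩, ?_, ?_⟩ <;> linarith
  have hBfar : ¬ CloseSets B {x | a x ≤ 4 * b x} := by
    refine not_not.2 (isCoentourage_of_infDist hc hA hB fun R hR => ⟨10 * R, ?_⟩)
    rintro x y ⟨hx, hy⟩ h1 h2 h3 h4
    change (a x ≤ _ ∧ b x ≤ _) ∧ (a y ≤ _ ∧ b y ≤ _)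
    have := hBz x hx
    change a y ≤ 4 * b y at hy
    change a x ≤ a y + R at h1
    change b x ≤ b y + R at h3
    change b y ≤ b x + R at h4
    refine ⟨⟨?_, ?_⟩, ?_, ?_⟩ <;> linarith
  have hfar : ¬ CloseSets {x | 2 * a x ≤ b x} {x | 2 * b x ≤ a x} := by
    refine not_not.2 (isCoentourage_of_infDist hc hA hB fun R hR => ⟨10 * R, ?_⟩)
    rintro x y ⟨hx, hy⟩ h1 h2 h3 h4
    change (a x ≤ _ ∧ b x ≤ _) ∧ (a y ≤ _ ∧ b y ≤ _)
    change 2 * a x ≤ b x at hx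
    change 2 * b y ≤ a y at hy
    change a x ≤ a y + R at h1
    change a y ≤ a x + R at h2
    change b x ≤ b y + R at h3
    change b y ≤ b x + R at h4
    refine ⟨⟨?_, ?_⟩, ?_, ?_⟩ <;> linarith
  refine ⟨![{x | 2 * a x ≤ b x}, {x | b x ≤ 4 * a x ∧ a x ≤ 4 * b x}, {x | 2 * b x ≤ a x}],
    ?_, ?_⟩
  · refine isCoentourage_of_infDist hc hA hB fun R hR => ⟨100 * R, ?_⟩
    intro x y hxy h1 h2 h3 h4
    change (a x ≤ _ ∧ b x ≤ _) ∧ (a y ≤ _ ∧ b y ≤ _)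
    change a x ≤ a y + R at h1
    change a y ≤ a x + R at h2
    change b x ≤ b y + R at h3
    change b y ≤ b x + R at h4
    simp only [mem_compl_iff, mem_iUnion, not_exists, mem_prod] at hxy
    have e0 : ¬ (2 * a x ≤ b x ∧ 2 * a y ≤ b y) := hxy 0
    have e1 : ¬ ((b x ≤ 4 * a x ∧ a x ≤ 4 * b x) ∧ (b y ≤ 4 * a y ∧ a y ≤ 4 * b y)) := hxy 1
    have e2 : ¬ (2 * b x ≤ a x ∧ 2 * b y ≤ a y) := hxy 2
    have := ha0 x
    have := ha0 y
    have := hb0 x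
    have := hb0 y
    clear_value a b
    simp only [not_and_or, not_le] at e0 e1 e2
    rcases e0 with e0 | e0 <;> rcases e2 with e2 | e2 <;>
      rcases e1 with (e1 | e1) | (e1 | e1) <;>
      refine ⟨⟨?_, ?_⟩, ?_, ?_⟩ <;> linarith
  · intro j k hj hjk hk
    have hj0 : j = 0 := by
      fin_cases j
      · rfl
      · exact absurd (hj.mono subset_rfl fun x hx => hx.1) hAfar
      · refine absurd (hj.mono subset_rfl fun x hx => ?_) hAfar
        change 2 * b x ≤ a x at hx
        change b x ≤ 4 * a x
        linarith [ha0 x, hb0 x]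
    have hk2 : k = 2 := by
      fin_cases k
      · refine absurd (hk.symm.mono subset_rfl fun x hx => ?_) hBfar
        change 2 * a x ≤ b x at hx
        change a x ≤ 4 * b x
        linarith [ha0 x, hb0 x]
      · exact absurd (hk.symm.mono subset_rfl fun x hx => hx.2) hBfar
      · rfl
    subst hj0 hk2
    exact absurd hjk hfar

end Separation

/-! ### Pieces of a coarse cover and composition -/

lemma entImage_mono {E F : Set (X × X)} {A B : Set X} (hE : E ⊆ F) (hA : A ⊆ B) :
    entImage E A ⊆ entImage F B :=
  fun _ ⟨x, hx, h⟩ => ⟨x, hA hx, hE h⟩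

section Refinement

variable [MetricSpace X]

/-- The set of points whose set of indices `{i | x ∈ U i}` is exactly `S`. -/
def piece {ι : Type*} (U : ι → Set X) (S : Set ι) : Set X := {x | {i | x ∈ U i} = S}

lemma inter_nonempty_of_close {ι : Type*} {U : ι → Set X} (hU : IsCoarseCover U) {S S' : Set ι}
    (h : CloseSets (piece U S) (piece U S')) : (S ∩ S').Nonempty := by
  by_contra hn
  refine h (hU.mono ?_)
  rintro ⟨x, y⟩ ⟨rfl, rfl⟩ hxy
  obtain ⟨i, hi⟩ := mem_iUnion.1 hxy
  exact hn ⟨i, hi.1, hi.2⟩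

/-- A finite family of coarse covers has a common refinement by intersections. -/
lemma isCoarseCover_iInter {κ η : Type*} [Finite κ] {V : κ → η → Set X}
    (hV : ∀ p, IsCoarseCover (V p)) : IsCoarseCover (fun g : κ → η => ⋂ p, V p (g p)) := by
  refine isCoentourage_of_cover hV ?_
  rintro ⟨x, y⟩ hxy
  by_contra! hn
  have hn' : ∀ p, ∃ k, x ∈ V p k ∧ y ∈ V p k := by
    intro p
    simpa using hn p
  choose g hg using hn'
  exact hxy (mem_iUnion.2 ⟨g, mem_iInter.2 fun p => (hg p).1, mem_iInter.2 fun p => (hg p).2⟩)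

lemma exists_chain_cover {ι : Type} [Finite ι] {U : ι → Set X} (hU : IsCoarseCover U) :
    ∃ (n : ℕ) (V : Fin n → Set X), IsCoarseCover V ∧
      ∀ S S' j k, CloseSets (piece U S) (V j) → CloseSets (V j) (V k) →
        CloseSets (V k) (piece U S') → (S ∩ S').Nonempty := by
  choose W hW hsep using fun p : Set ι × Set ι =>
    exists_separating_cover (piece U p.1) (piece U p.2)
  obtain ⟨n, ⟨e⟩⟩ := Finite.exists_equiv_fin ((Set ι × Set ι) → Fin 3)
  refine ⟨n, fun m => ⋂ p, W p (e.symm m p), ?_, ?_⟩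
  · refine (isCoarseCover_iInter hW).mono (compl_subset_compl.2 ?_)
    refine iUnion_subset fun g => ?_
    refine subset_iUnion_of_subset (e g) ?_
    simp
  · intro S S' j k h1 h2 h3
    have hs : ∀ m, (⋂ p, W p (e.symm m p)) ⊆ W (S, S') (e.symm m (S, S')) :=
      fun m => iInter_subset _ _
    exact inter_nonempty_of_close hU (hsep (S, S') _ _ (h1.mono subset_rfl (hs j))
      (h2.mono (hs j) (hs k)) (h3.mono (hs k) subset_rfl))

/-- The composition step for one of the two inclusions in the definition of `D_𝒰`. -/
lemma subset_star_of_chain {ι κ : Type*} [Finite ι] [Finite κ] {U : ι → Set X} {V : κ → Set X}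
    (hV : ∀ S S' j k, CloseSets (piece U S) (V j) → CloseSets (V j) (V k) →
        CloseSets (V k) (piece U S') → (S ∩ S').Nonempty)
    {P Q Z : Set X} (hne : (coarseStar P U).Nonempty) {E F : Set (X × X)}
    (hE : IsEntourage E) (hF : IsEntourage F)
    (hQ : Q ⊆ entImage E (coarseStar P V)) (hZ : Z ⊆ entImage F (coarseStar Q V)) :
    ∃ G : Set (X × X), IsEntourage G ∧ Z ⊆ entImage G (coarseStar P U) := by
  obtain ⟨s, hs⟩ := hne
  obtain ⟨C, hC⟩ := hE
  obtain ⟨D, hD⟩ := hF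
  -- The exceptional points: those in a bounded intersection of a piece with a member of `V`.
  have hW : Bornology.IsBounded
      (⋃ p : {p : Set ι × κ // Bornology.IsBounded (piece U p.1 ∩ V p.2)},
        piece U p.1.1 ∩ V p.1.2) := Bornology.isBounded_iUnion.2 fun p => p.2
  obtain ⟨K, hK⟩ := hW.subset_closedBall s
  refine ⟨{p | dist p.1 p.2 ≤ max D (K + D)}, ⟨_, fun p hp => hp⟩, fun z hz => ?_⟩
  obtain ⟨v, hv, hvz⟩ := hZ hz
  have hvz' : dist v z ≤ D := hD _ hvz
  obtain ⟨j, hQj, hvj⟩ := mem_coarseStar.1 hv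
  by_cases hb : Bornology.IsBounded (piece U {i | v ∈ U i} ∩ V j)
  · refine ⟨s, hs, show dist s z ≤ _ from le_max_of_le_right ?_⟩
    have h1 : dist v s ≤ K := hK (mem_iUnion.2 ⟨⟨(_, j), hb⟩, rfl, hvj⟩)
    have h2 := dist_triangle s v z
    rw [dist_comm s v] at h2
    linarith
  · refine ⟨v, ?_, le_max_of_le_left hvz'⟩
    have h1 := closeSets_of_not_isBounded_inter hb
    have h2 : CloseSets (V j) (coarseStar P V) := hQj.symm.of_thickening (C := C) fun q hq => by
      obtain ⟨w, hw, hwq⟩ := hQ hq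
      exact ⟨w, hw, hC _ hwq⟩
    obtain ⟨k, hPk, hjk⟩ := h2.exists_of_star
    obtain ⟨S', hS'⟩ := hPk.symm.exists_of_cover (D := fun S => P ∩ piece U S)
      fun x hx => ⟨_, hx, rfl⟩
    obtain ⟨i, hi, hi'⟩ := hV _ S' j k h1 hjk (hS'.mono subset_rfl inter_subset_right)
    refine mem_coarseStar.2 ⟨i, closeSets_of_not_isBounded_inter fun hbd => ?_, hi⟩
    refine hS'.symm.not_isBounded_left (hbd.subset ?_)
    rintro x ⟨hx, rfl⟩
    exact ⟨hx, hi'⟩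

lemma IsEntourage.union {E F : Set (X × X)} (hE : IsEntourage E) (hF : IsEntourage F) :
    IsEntourage (E ∪ F) := by
  obtain ⟨C, hC⟩ := hE
  obtain ⟨D, hD⟩ := hF
  exact ⟨max C D, fun p hp => hp.elim (fun h => le_max_of_le_left (hC p h))
    fun h => le_max_of_le_right (hD p h)⟩

lemma exists_subset_entImage_star {ι : Type*} [Finite ι] {U : ι → Set X} (hU : IsCoarseCover U)
    {P : Set X} (hP : ¬ Bornology.IsBounded P) :
    ∃ E : Set (X × X), IsEntourage E ∧ P ⊆ entImage E (coarseStar P U) := by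
  obtain ⟨s, hs⟩ := coarseStar_nonempty hU hP
  obtain ⟨K, hK⟩ := (isBounded_diff_star hU P).subset_closedBall s
  refine ⟨{p | dist p.1 p.2 ≤ max 0 K}, ⟨_, fun p hp => hp⟩, fun x hx => ?_⟩
  by_cases hxs : x ∈ coarseStar P U
  · exact ⟨x, hxs, by simp⟩
  · refine ⟨s, hs, show dist s x ≤ _ from le_max_of_le_right ?_⟩
    rw [dist_comm]
    exact hK ⟨hx, hxs⟩

lemma inUNbhd.of_star_mono {ι κ : Type*} {U : ι → Set X} {V : κ → Set X} {φ ψ : ℕ → X}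
    (f : ι → κ) (hf : ∀ i, U i ⊆ V (f i)) (h : inUNbhd U φ ψ) : inUNbhd V φ ψ := by
  have hs : ∀ S, coarseStar S U ⊆ coarseStar S V := fun S x hx => by
    obtain ⟨i, hi, hx⟩ := mem_coarseStar.1 hx
    exact mem_coarseStar.2 ⟨f i, hi.mono subset_rfl (hf i), hf i hx⟩
  obtain ⟨E, hE, h1, h2⟩ := h
  exact ⟨E, hE, h1.trans (entImage_mono subset_rfl (hs _)),
    h2.trans (entImage_mono subset_rfl (hs _))⟩

lemma inUNbhd.symm {ι : Type*} {U : ι → Set X} {φ ψ : ℕ → X} (h : inUNbhd U φ ψ) :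
    inUNbhd U ψ φ := by
  obtain ⟨E, hE, h1, h2⟩ := h
  exact ⟨E, hE, h2, h1⟩

end Refinement

/-- the sets `D_𝒰` form a base for a uniformity on the set of endpoints. -/
theorem soe_uniformity_base [MetricSpace X] :
    -- (1) each `D_𝒰` contains the diagonal
    (∀ (ι : Type) [Fintype ι] (U : ι → Set X), IsCoarseCover U →
      ∀ φ : ℕ → X, IsCoarseMap φ → inUNbhd U φ φ) ∧
    -- (2) `𝒰 ∩ 𝒱` is a coarse cover with `D_{𝒰∩𝒱} ⊆ D_𝒰 ∩ D_𝒱`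
    (∀ (ι κ : Type) [Fintype ι] [Fintype κ] (U : ι → Set X) (V : κ → Set X),
      IsCoarseCover U → IsCoarseCover V →
      IsCoarseCover (fun p : ι × κ => U p.1 ∩ V p.2) ∧
      ∀ φ ψ : ℕ → X, IsCoarseMap φ → IsCoarseMap ψ →
        inUNbhd (fun p : ι × κ => U p.1 ∩ V p.2) φ ψ → inUNbhd U φ ψ ∧ inUNbhd V φ ψ) ∧
    -- (3) for every `𝒰` there is `𝒱` with `D_𝒱 ∘ D_𝒱 ⊆ D_𝒰`
    (∀ (ι : Type) [Fintype ι] (U : ι → Set X), IsCoarseCover U →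
      ∃ (n : ℕ) (V : Fin n → Set X), IsCoarseCover V ∧
        ∀ φ ρ ψ : ℕ → X, IsCoarseMap φ → IsCoarseMap ρ → IsCoarseMap ψ →
          inUNbhd V φ ρ → inUNbhd V ρ ψ → inUNbhd U φ ψ) ∧
    -- (4) `D_𝒰 = D_𝒰⁻¹`
    (∀ (ι : Type) [Fintype ι] (U : ι → Set X), IsCoarseCover U →
      ∀ φ ψ : ℕ → X, IsCoarseMap φ → IsCoarseMap ψ → (inUNbhd U φ ψ ↔ inUNbhd U ψ φ)) := by
  refine ⟨?_, ?_, ?_, ?_⟩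
  · intro ι _ U hU φ hφ
    obtain ⟨E, hE, h⟩ := exists_subset_entImage_star hU hφ.not_isBounded_range
    exact ⟨E, hE, h, h⟩
  · intro ι κ _ _ U V hU hV
    refine ⟨?_, fun φ ψ _ _ h => ⟨h.of_star_mono Prod.fst fun _ => inter_subset_left,
      h.of_star_mono Prod.snd fun _ => inter_subset_right⟩⟩
    refine isCoentourage_of_cover (ι := Bool)
      (D := fun c => cond c (⋃ i, U i ×ˢ U i)ᶜ (⋃ j, V j ×ˢ V j)ᶜ)
      (by rintro (_ | _); exacts [hV, hU]) ?_
    rintro ⟨x, y⟩ hxy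
    by_contra! hn
    have h1 : ∃ i, x ∈ U i ∧ y ∈ U i := by simpa using hn true
    have h2 : ∃ j, x ∈ V j ∧ y ∈ V j := by simpa using hn false
    obtain ⟨i, hi⟩ := h1
    obtain ⟨j, hj⟩ := h2
    exact hxy (mem_iUnion.2 ⟨(i, j), ⟨hi.1, hj.1⟩, hi.2, hj.2⟩)
  · intro ι _ U hU
    obtain ⟨n, V, hV, hchain⟩ := exists_chain_cover hU
    refine ⟨n, V, hV, ?_⟩
    rintro φ ρ ψ hφ hρ hψ ⟨E, hE, hE1, hE2⟩ ⟨F, hF, hF1, hF2⟩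
    obtain ⟨G, hG, h1⟩ := subset_star_of_chain hchain
      (coarseStar_nonempty hU hφ.not_isBounded_range) hE hF hE1 hF1
    obtain ⟨H, hH, h2⟩ := subset_star_of_chain hchain
      (coarseStar_nonempty hU hψ.not_isBounded_range) hF hE hF2 hE2
    exact ⟨G ∪ H, hG.union hH, h1.trans (entImage_mono subset_union_left subset_rfl),
      h2.trans (entImage_mono subset_union_right subset_rfl)⟩
  · intro ι _ U hU φ ψ _ _
    exact ⟨inUNbhd.symm, inUNbhd.symm⟩
end

section
/- If i:Z→Y is the inclusion of a metric subspace Z ⊆ Y (with the restricted metric), then soe(i):soe(Z)→soe(Y) is a uniform embedding: soe(i) is injective, and for every coarse cover 𝒰 of Z there is a coarse cover 𝒱 of Y such that for all endpoints p,q of Z, soe(i)(q) ∈ 𝒱[soe(i)(p)] implies q ∈ 𝒰[p]. -/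
/-!
Both parts rest on the fact that distances in `Z` are those of `Y`. Injectivity is immediate: an
entourage of `Y` restricts to one of `Z`.

For the second part, each set `A ⊆ Z` is thickened to the sector `V_A` of all `y : Y` having a point
of `A` at distance at most `2 d(y, Z) + 1` (`sector`). A point `z` of `Z` within `R` of `V_A` is
within `3R + 1` of `A`, so near `Z` the sector is no larger than `A`: a subset of `Z` close to `V_A`
in `Y` is close to `A` in `Z` (`closeSets_of_closeSets_sector`).

Given a coarse cover `𝒰` of `Z`, there is a bounded `B` such that `𝒰` and `B` together cover `Z`
pointwise. The sectors over the `Uᵢ` and over `B` form a coarse cover of `Y`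
(`exists_bounded_of_sector`): a pair of `R`-close points far from `Z` lies in the sector over any
member containing an almost nearest point of `Z`, and for a pair near `Z` the almost nearest points
form a controlled pair of `Z`, to which the coarse cover property of `𝒰` applies. The sector over
`B` never enters a star, since no set is close to a bounded set, so stars of `𝒱` restrict to stars
of `𝒰` up to an entourage (`exists_near_coarseStar`).
-/

open Set

variable {X Y : Type*}

/-- The sector over `A ⊆ Z`: the points `y` with `d(y, a) ≤ 2 d(y, Z) + 1` for some `a ∈ A`. The
distance to `Z` is expressed by quantifying over the points of `Z`. -/
def sector [MetricSpace Y] {Z : Set Y} (A : Set Z) : Set Y :=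
  {y | ∃ a ∈ A, ∀ z : Z, dist y a ≤ 2 * dist y z + 1}

/-- Neighbourhoods of bounded sets are bounded; `f` is either the identity or the inclusion of a
subspace. -/
lemma isBoundedSet_thickening [MetricSpace X] [MetricSpace Y] {f : X → Y} (hf : Isometry f)
    {B : Set X} (hB : IsBoundedSet B) (r : ℝ) :
    IsBoundedSet {y | ∃ b ∈ B, dist (f b) y ≤ r} := by
  obtain ⟨C, hC⟩ := hB
  refine ⟨C + 2 * r, ?_⟩
  rintro ⟨x, y⟩ ⟨⟨a, ha, hax⟩, ⟨b, hb, hby⟩⟩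
  have h1 := hC (a, b) ⟨ha, hb⟩
  have h2 := hf.dist_eq a b
  have h3 := dist_triangle4 x (f a) (f b) y
  rw [dist_comm x (f a)] at h3
  simp only at h1 ⊢
  linarith

lemma isCoentourage_prod_of_bounded [MetricSpace X] (S : Set X) {B : Set X}
    (hB : IsBoundedSet B) : IsCoentourage (S ×ˢ B) := by
  rintro E ⟨C, hC⟩
  refine ⟨_, isBoundedSet_thickening isometry_id hB (max C 0), ?_⟩
  rintro ⟨s, b⟩ ⟨hE, -, hb⟩
  refine ⟨⟨b, hb, ?_⟩, ⟨b, hb, by simp⟩⟩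
  have h := hC _ hE
  rw [dist_comm] at h
  exact h.trans (le_max_left _ _)

/-- A point of `Z` within `R` of the sector over `A` is within `3R + 1` of `A`. -/
lemma exists_near_of_mem_sector [MetricSpace Y] {Z : Set Y} {A : Set Z} {v : Y}
    (hv : v ∈ sector A) {z : Z} {R : ℝ} (h : dist v z ≤ R) :
    ∃ a ∈ A, dist v a ≤ 2 * R + 1 ∧ dist a z ≤ 3 * R + 1 := by
  obtain ⟨a, ha, hva⟩ := hv
  have h1 := hva z
  refine ⟨a, ha, by linarith, ?_⟩
  have h2 := dist_triangle_left (a : Y) z v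
  rw [Subtype.dist_eq]
  linarith

lemma closeSets_of_closeSets_sector [MetricSpace Y] {Z : Set Y} {S A : Set Z}
    (h : CloseSets (Subtype.val '' S) (sector A)) : CloseSets S A := by
  intro hco
  apply h
  rintro E ⟨C, hC⟩
  obtain ⟨B, hB, hsub⟩ := hco {p | dist p.1 p.2 ≤ 3 * C + 1} ⟨_, fun p hp => hp⟩
  refine ⟨_, isBoundedSet_thickening isometry_subtype_coe hB (2 * C + 1), ?_⟩
  rintro ⟨_, v⟩ ⟨hE, ⟨s, hs, rfl⟩, hv⟩
  have hd : dist (s : Y) v ≤ C := hC _ hE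
  have hC0 : 0 ≤ C := dist_nonneg.trans hd
  rw [dist_comm] at hd
  obtain ⟨a, ha, h1, h2⟩ := exists_near_of_mem_sector hv hd
  rw [dist_comm] at h1 h2
  obtain ⟨hsB, haB⟩ := hsub (show (s, a) ∈ _ from ⟨h2, hs, ha⟩)
  refine ⟨⟨s, hsB, ?_⟩, ⟨a, haB, h1⟩⟩
  rw [dist_self]
  linarith

lemma exists_almost_nearest [MetricSpace Y] {Z : Set Y} (hZ : Z.Nonempty) (y : Y) :
    ∃ z : Z, ∀ z' : Z, dist y z ≤ dist y z' + 1 := by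
  obtain ⟨z, hz, h⟩ := (Metric.infDist_lt_iff hZ (x := y)).1 (lt_add_one (Metric.infDist y Z))
  refine ⟨⟨z, hz⟩, fun z' => ?_⟩
  have := Metric.infDist_le_dist_of_mem (x := y) z'.2
  simp only
  linarith

/-- The coarse cover property of the sectors over a family that covers `Z` both coarsely and
pointwise, at scale `R`. -/
lemma exists_bounded_of_sector [MetricSpace Y] {Z : Set Y} (hZ : Z.Nonempty) {κ : Type*}
    {U : κ → Set Z} (hU : IsCoarseCover U) (hcov : ∀ z, ∃ k, z ∈ U k) (R : ℝ) :
    ∃ B : Set Y, IsBoundedSet B ∧ ∀ x y : Y, dist x y ≤ R →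
      (∀ k, ¬ (x ∈ sector (U k) ∧ y ∈ sector (U k))) → x ∈ B ∧ y ∈ B := by
  obtain ⟨B, hB, hsub⟩ := hU {p | dist p.1 p.2 ≤ 8 * R + 3} ⟨_, fun p hp => hp⟩
  refine ⟨_, isBoundedSet_thickening isometry_subtype_coe hB (4 * R + 2), ?_⟩
  intro x y hxy hno
  have hR : 0 ≤ R := dist_nonneg.trans hxy
  obtain ⟨z, hz⟩ := exists_almost_nearest hZ x
  obtain ⟨w, hw⟩ := exists_almost_nearest hZ y
  have hyz : dist y z ≤ R + dist x z := (dist_triangle_left y z x).trans (by linarith)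
  by_cases hfar : 3 * R + 1 ≤ dist x z
  · -- Far from `Z`, a single almost nearest point `z` witnesses membership of both `x` and `y`.
    exfalso
    obtain ⟨k, hk⟩ := hcov z
    refine hno k ⟨⟨z, hk, fun z' => ?_⟩, ⟨z, hk, fun z' => ?_⟩⟩
    · have h1 := hz z'
      have h2 : 0 ≤ dist x z' := dist_nonneg
      linarith
    · have h1 := hz z'
      have h2 := dist_triangle x y z'
      linarith
  · push Not at hfar
    have hyw := hw z
    have hzw : dist z w ≤ 8 * R + 3 := by
      have h1 := dist_triangle4 (z : Y) x y w
      rw [dist_comm (z : Y) x] at h1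
      rw [Subtype.dist_eq]
      linarith
    have hmem : (z, w) ∈ (⋃ k, U k ×ˢ U k)ᶜ := by
      intro hmem
      obtain ⟨k, hzk, hwk⟩ := mem_iUnion.1 hmem
      refine hno k ⟨⟨z, hzk, fun z' => ?_⟩, ⟨w, hwk, fun z' => ?_⟩⟩
      · have h1 := hz z'
        have h2 : 0 ≤ dist x z' := dist_nonneg
        linarith
      · have h1 := hw z'
        have h2 : 0 ≤ dist y z' := dist_nonneg
        linarith
    obtain ⟨hzB, hwB⟩ := hsub ⟨hzw, hmem⟩
    refine ⟨⟨z, hzB, ?_⟩, ⟨w, hwB, ?_⟩⟩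
    · rw [dist_comm]
      linarith
    · rw [dist_comm]
      linarith

/-- Up to distance `3C + 1`, the star of `S ⊆ Z` with respect to the sectors over `B` and the `Uᵢ`
restricts to the star of `S` with respect to `U`; the bounded set `B` does not contribute. -/
lemma exists_near_coarseStar [MetricSpace Y] {Z : Set Y} {ι κ : Type*} {U : ι → Set Z}
    {B : Set Z} (hB : IsBoundedSet B) (e : κ → Option ι) {S : Set Z} {v : Y}
    (hv : v ∈ coarseStar (Subtype.val '' S) fun k => sector ((e k).elim B U))
    {z : Z} {C : ℝ} (h : dist v z ≤ C) :
    ∃ a ∈ coarseStar S U, dist a z ≤ 3 * C + 1 := by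
  obtain ⟨k, hk, hvk⟩ := mem_iUnion₂.1 hv
  have hcl := closeSets_of_closeSets_sector hk
  obtain ⟨a, ha, -, haz⟩ := exists_near_of_mem_sector hvk h
  rcases hek : e k with _ | i
  · rw [hek] at hcl
    exact absurd (isCoentourage_prod_of_bounded S hB) hcl
  · rw [hek] at hcl ha
    exact ⟨a, mem_iUnion₂.2 ⟨i, hcl, ha⟩, haz⟩

/-- the inclusion of a metric subspace induces a uniform embedding of
spaces of ends. -/
theorem soe_inclusion_uniform_embedding [MetricSpace Y] (Z : Set Y) :
    -- injective
    (∀ φ ψ : ℕ → Z, IsCoarseMap φ → IsCoarseMap ψ →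
      SameEnd (fun n => (φ n : Y)) (fun n => (ψ n : Y)) → SameEnd φ ψ) ∧
    -- uniform embedding
    (∀ (ι : Type) [Fintype ι] (U : ι → Set Z), IsCoarseCover U →
      ∃ (n : ℕ) (V : Fin n → Set Y), IsCoarseCover V ∧
        ∀ φ ψ : ℕ → Z, IsCoarseMap φ → IsCoarseMap ψ →
          inUNbhd V (fun n => (φ n : Y)) (fun n => (ψ n : Y)) → inUNbhd U φ ψ) := by
  refine ⟨?_, ?_⟩
  · rintro φ ψ - - ⟨E, ⟨C, hC⟩, hE⟩
    refine ⟨{p | ((p.1 : Y), (p.2 : Y)) ∈ E}, ⟨C, fun p hp => hC _ hp⟩, ?_⟩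
    ext z
    have hz := Set.ext_iff.1 hE z
    simp only [entImage, mem_ofPred_eq, mem_range, exists_exists_eq_and, Subtype.coe_inj] at hz ⊢
    exact hz
  · intro ι _ U hU
    rcases Z.eq_empty_or_nonempty with rfl | hZ
    · refine ⟨1, fun _ => univ, ?_, fun φ => (φ 0).2.elim⟩
      rintro E -
      refine ⟨∅, ⟨0, by simp⟩, ?_⟩
      rintro p ⟨-, hp⟩
      exact (hp (mem_iUnion.2 ⟨0, mem_univ _, mem_univ _⟩)).elim
    -- Applied to the diagonal, the coarse cover property bounds the set of uncovered points.
    obtain ⟨B, hB, hsub⟩ := hU {p | dist p.1 p.2 ≤ 0} ⟨_, fun p hp => hp⟩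
    have hcov : ∀ z, ∃ o : Option ι, z ∈ o.elim B U := by
      intro z
      by_cases h : ∃ i, z ∈ U i
      · obtain ⟨i, hi⟩ := h
        exact ⟨some i, hi⟩
      · refine ⟨none, (hsub (show (z, z) ∈ _ from ⟨by simp, fun hz => h ?_⟩)).1⟩
        obtain ⟨i, hi, -⟩ := mem_iUnion.1 hz
        exact ⟨i, hi⟩
    have hU' : IsCoarseCover fun o : Option ι => o.elim B U := by
      intro E hE
      obtain ⟨B', hB', h'⟩ := hU E hE
      refine ⟨B', hB', fun p hp => h' ⟨hp.1, fun hmem => hp.2 ?_⟩⟩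
      obtain ⟨i, hi⟩ := mem_iUnion.1 hmem
      exact mem_iUnion.2 ⟨some i, hi⟩
    let e := Fintype.equivFin (Option ι)
    refine ⟨_, fun k => sector ((e.symm k).elim B U), ?_, ?_⟩
    · rintro E ⟨C, hC⟩
      obtain ⟨B', hB', h'⟩ := exists_bounded_of_sector hZ hU' hcov C
      refine ⟨B', hB', ?_⟩
      rintro ⟨x, y⟩ ⟨hE, hno⟩
      refine h' x y (hC _ hE) fun o ho => hno (mem_iUnion.2 ⟨e o, ?_⟩)
      simpa using ho
    · rintro φ ψ - - ⟨E, ⟨C, hC⟩, h1, h2⟩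
      have key : ∀ α β : ℕ → Z, range (fun n => (β n : Y)) ⊆
          entImage E (coarseStar (range fun n => (α n : Y))
            fun k => sector ((e.symm k).elim B U)) →
          range β ⊆ entImage {p | dist p.1 p.2 ≤ 3 * C + 1} (coarseStar (range α) U) := by
        rintro α β h _ ⟨n, rfl⟩
        obtain ⟨v, hv, hvE⟩ := h ⟨n, rfl⟩
        have hr : (range fun n => (α n : Y)) = Subtype.val '' range α := range_comp _ _
        rw [hr] at hv
        exact exists_near_coarseStar hB e.symm hv (hC _ hvE)
      exact ⟨_, ⟨_, fun p hp => hp⟩, key φ ψ h1, key ψ φ h2⟩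
end

section
/- Let U, V be two subsets that coarsely cover a metric space X. An endpoint p of X has a representative coarse map φ:ℤ₊→X with φ(ℤ₊) ⊆ U∩V if and only if p has a representative with image contained in U and a representative with image contained in V. (In the notation of induced embeddings: soe(U∩V) = soe(U) ∩ soe(V) inside soe(X).) -/
/-! `SameEnd φ ψ` says exactly that `φ(ℕ)` lies in a metric neighbourhood of `ψ(ℕ)`
(`sameEnd_iff`). So if `φ₁(ℕ) ⊆ U` and `φ₂(ℕ) ⊆ V` represent the endpoint of `φ`, every `φ n` is
uniformly close to some `x ∈ U` and to some `y ∈ V`, and `d(x, y)` is uniformly bounded. By the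
coarse cover condition, outside a bounded set `B` the pair `(x, y)` lies in `U × U` or in `V × V`;
accordingly `y` or `x` lies in `U ∩ V`. Only finitely many `n` have `φ n` near `B`, since `φ` is
proper, and for those any fixed point of `U ∩ V` serves. Choosing for each `n` a point of `U ∩ V`
near `φ n` gives a map close to `φ`, hence coarse (`IsCoarseMap.of_close`). -/

open Set

variable {X Y : Type*}

/-- The condition `E[ψ(ℕ)] = φ(ℕ)` is one-sided: points of `ψ(ℕ)` outside the domain of `E` are
unconstrained, so only `φ(ℕ)` has to stay near `ψ(ℕ)`. -/
theorem sameEnd_iff [MetricSpace X] (φ ψ : ℕ → X) :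
    SameEnd φ ψ ↔ ∃ C : ℝ, ∀ n, ∃ m, dist (φ n) (ψ m) ≤ C := by
  constructor
  · rintro ⟨E, ⟨C, hC⟩, hE⟩
    refine ⟨C, fun n => ?_⟩
    have hn : φ n ∈ entImage E (Set.range ψ) := hE ▸ Set.mem_range_self n
    obtain ⟨_, ⟨m, rfl⟩, hm⟩ := hn
    exact ⟨m, by rw [dist_comm]; exact hC _ hm⟩
  · rintro ⟨C, hC⟩
    refine ⟨{p | p.2 ∈ Set.range φ ∧ dist p.1 p.2 ≤ C}, ⟨C, fun p hp => hp.2⟩, ?_⟩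
    ext y
    constructor
    · rintro ⟨_, _, hy, _⟩
      exact hy
    · rintro ⟨n, rfl⟩
      obtain ⟨m, hm⟩ := hC n
      exact ⟨ψ m, ⟨m, rfl⟩, ⟨n, rfl⟩, by rw [dist_comm]; exact hm⟩

theorem IsBoundedSet.thickening [MetricSpace X] {B : Set X} (hB : IsBoundedSet B) (C : ℝ) :
    IsBoundedSet {x | ∃ b ∈ B, dist x b ≤ C} := by
  obtain ⟨K, hK⟩ := hB
  refine ⟨C + K + C, ?_⟩
  rintro ⟨x, y⟩ ⟨⟨b, hb, hxb⟩, c, hc, hyc⟩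
  have h1 : dist b c ≤ K := hK (b, c) ⟨hb, hc⟩
  have h2 := dist_triangle4 x b c y
  rw [dist_comm c y] at h2
  change dist x y ≤ _
  linarith

theorem IsCoarseMap.of_close [MetricSpace X] [MetricSpace Y] {f g : X → Y} (hf : IsCoarseMap f)
    {C : ℝ} (hC : ∀ x, dist (f x) (g x) ≤ C) : IsCoarseMap g := by
  refine ⟨fun E hE => ?_, fun A hA => ?_⟩
  · obtain ⟨K, hK⟩ := hf.1 E hE
    refine ⟨C + K + C, ?_⟩
    rintro _ ⟨⟨x, y⟩, hxy, rfl⟩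
    have h1 : dist (f x) (f y) ≤ K := hK _ ⟨(x, y), hxy, rfl⟩
    have h2 := dist_triangle4 (g x) (f x) (f y) (g y)
    have h3 := hC x
    have h4 := hC y
    rw [dist_comm (g x) (f x)] at h2
    change dist (g x) (g y) ≤ _
    linarith
  · obtain ⟨K, hK⟩ := hf.2 _ (hA.thickening C)
    exact ⟨K, fun p hp => hK p ⟨⟨_, hp.1, hC _⟩, ⟨_, hp.2, hC _⟩⟩⟩

theorem IsBoundedSet.exists_nat_lt {S : Set ℕ} (hS : IsBoundedSet S) :
    ∃ N : ℕ, ∀ n ∈ S, n < N := by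
  obtain ⟨K, hK⟩ := hS
  rcases S.eq_empty_or_nonempty with rfl | ⟨m, hm⟩
  · exact ⟨0, by simp⟩
  · obtain ⟨N, hN⟩ := exists_nat_gt ((m : ℝ) + K)
    refine ⟨N, fun n hn => ?_⟩
    have h1 : dist n m ≤ K := hK (n, m) ⟨hn, hm⟩
    rw [Nat.dist_eq] at h1
    have h2 := le_abs_self ((n : ℝ) - m)
    have h3 : (n : ℝ) < N := by linarith
    exact_mod_cast h3

/-- `soe(U ∩ V) = soe(U) ∩ soe(V)` for a coarse cover `U, V`. -/
theorem soe_inter_of_coarseCover [MetricSpace X] (U V : Set X)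
    (h : IsCoarseCover ![U, V]) (φ : ℕ → X) (hφ : IsCoarseMap φ) :
    (∃ φ' : ℕ → X, IsCoarseMap φ' ∧ SameEnd φ φ' ∧ Set.range φ' ⊆ U ∩ V) ↔
      ((∃ φ₁ : ℕ → X, IsCoarseMap φ₁ ∧ SameEnd φ φ₁ ∧ Set.range φ₁ ⊆ U) ∧
       (∃ φ₂ : ℕ → X, IsCoarseMap φ₂ ∧ SameEnd φ φ₂ ∧ Set.range φ₂ ⊆ V)) := by
  constructor
  · rintro ⟨φ', hc, hs, hr⟩
    exact ⟨⟨φ', hc, hs, fun x hx => (hr hx).1⟩, ⟨φ', hc, hs, fun x hx => (hr hx).2⟩⟩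
  · rintro ⟨⟨φ₁, -, hs₁, hr₁⟩, φ₂, -, hs₂, hr₂⟩
    obtain ⟨C₁, hC₁⟩ := (sameEnd_iff _ _).1 hs₁
    obtain ⟨C₂, hC₂⟩ := (sameEnd_iff _ _).1 hs₂
    obtain ⟨B, hB, hEB⟩ := h {p | dist p.1 p.2 ≤ C₁ + C₂} ⟨C₁ + C₂, fun p hp => hp⟩
    obtain ⟨N, hN⟩ := (hφ.2 _ (hB.thickening C₁)).exists_nat_lt
    have key : ∀ n, N ≤ n → ∃ x ∈ U ∩ V, dist (φ n) x ≤ max C₁ C₂ := by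
      intro n hn
      obtain ⟨s, hs⟩ := hC₁ n
      obtain ⟨t, ht⟩ := hC₂ n
      have hxU : φ₁ s ∈ U := hr₁ ⟨s, rfl⟩
      have hyV : φ₂ t ∈ V := hr₂ ⟨t, rfl⟩
      have hst : dist (φ₁ s) (φ₂ t) ≤ C₁ + C₂ := by
        have := dist_triangle_left (φ₁ s) (φ₂ t) (φ n)
        linarith
      by_cases hU : φ₂ t ∈ U
      · exact ⟨φ₂ t, ⟨hU, hyV⟩, ht.trans (le_max_right _ _)⟩
      by_cases hV : φ₁ s ∈ V
      · exact ⟨φ₁ s, ⟨hxU, hV⟩, hs.trans (le_max_left _ _)⟩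
      -- The pair lies in neither square, hence in `B × B`, which forces `n < N`.
      have hmem : (φ₁ s, φ₂ t) ∈ B ×ˢ B := by
        refine hEB ⟨hst, ?_⟩
        simp [hU, hV]
      exact absurd (hN n ⟨_, hmem.1, hs⟩) (not_lt.2 hn)
    obtain ⟨x₀, hx₀, -⟩ := key N le_rfl
    -- The sum bounds the distances from `x₀` to the finitely many exceptional points `φ n`, `n < N`.
    have all : ∀ n, ∃ x ∈ U ∩ V,
        dist (φ n) x ≤ max (max C₁ C₂) (∑ k ∈ Finset.range N, dist (φ k) x₀) := by
      intro n
      rcases lt_or_ge n N with hn | hn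
      · exact ⟨x₀, hx₀, le_max_of_le_right (Finset.single_le_sum
          (f := fun k => dist (φ k) x₀) (fun _ _ => dist_nonneg) (Finset.mem_range.2 hn))⟩
      · obtain ⟨x, hx, hd⟩ := key n hn
        exact ⟨x, hx, le_max_of_le_left hd⟩
    choose φ' hmem hd using all
    refine ⟨φ', hφ.of_close hd, (sameEnd_iff _ _).2 ⟨_, fun n => ⟨n, hd n⟩⟩, ?_⟩
    rintro _ ⟨n, rfl⟩
    exact hmem n
end

section
/- Let X be a metric space. The uniformity on soe(X) is separated: for every two distinct endpoints p ≠ q of X there is a coarse cover 𝒰 of X such that q ∉ 𝒰[p]; hence the intersection of all the entourages D_𝒰 is the diagonal of soe(X). -/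
/-!
If `φ` and `ψ` represent different endpoints, then `φ(ℕ)` lies in no bounded neighbourhood of
`ψ(ℕ)`, since otherwise `{(ψ m, φ n) : d(ψ m, φ n) ≤ C}` would be an entourage witnessing
`SameEnd φ ψ`. Hence there are points `a k ∈ φ(ℕ)` at distance more than `4 k` from `ψ(ℕ)`.

The complement of `⋃ k, ball (a k) k` together with `⋃ k, ball (a k) (2 k)` forms a coarse cover
(`isCoarseCover_sepCover`): the `k`-th shell has width `k`, so a pair of points at distance at most
`R` can straddle it only for `k ≤ R`, which confines the pair to finitely many balls. For the same
reason the second member is not close to `ψ(ℕ)`, so the coarse star of `ψ(ℕ)` lies in the first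
member. That member is at distance at least `k` from `a k`, so no bounded neighbourhood of the star
contains `φ(ℕ)`.
-/

open Set

variable {X Y : Type*}

/-- The two-member cover attached to a sequence `a`: the points outside every `ball (a k) k`, and
the points inside some `ball (a k) (2 k)`. -/
def sepCover [MetricSpace X] (a : ℕ → X) : Fin 2 → Set X :=
  ![{x | ∀ k : ℕ, (k : ℝ) ≤ dist x (a k)}, {x | ∃ k : ℕ, dist x (a k) < 2 * k}]

/-- A finite union of balls, large enough to contain every pair of points at distance at most `N`
that has to be discarded. -/
def ballUnion [MetricSpace X] (a : ℕ → X) (N : ℕ) : Set X :=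
  ⋃ k ∈ Set.Iic N, Metric.closedBall (a k) (3 * N)

lemma isBoundedSet_ballUnion [MetricSpace X] (a : ℕ → X) (N : ℕ) :
    IsBoundedSet (ballUnion a N) := by
  have h : Bornology.IsBounded (ballUnion a N) :=
    (Bornology.isBounded_biUnion (Set.finite_Iic N)).2 fun k _ => Metric.isBounded_closedBall
  obtain ⟨C, hC⟩ := Metric.isBounded_iff.1 h
  exact ⟨C, fun p hp => hC hp.1 hp.2⟩

lemma mem_ballUnion [MetricSpace X] {a : ℕ → X} {N k : ℕ} {x : X} (hk : (k : ℝ) ≤ N)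
    (hx : dist x (a k) ≤ 3 * N) : x ∈ ballUnion a N :=
  Set.mem_iUnion₂.2 ⟨k, Nat.cast_le.1 hk, hx⟩

lemma isCoentourage_of_ballUnion [MetricSpace X] (a : ℕ → X) (C : Set (X × X))
    (h : ∀ N : ℕ, ∀ x y, (x, y) ∈ C → dist x y ≤ N → x ∈ ballUnion a N ∧ y ∈ ballUnion a N) :
    IsCoentourage C := by
  rintro E ⟨R, hR⟩
  obtain ⟨N, hN⟩ := exists_nat_ge R
  exact ⟨ballUnion a N, isBoundedSet_ballUnion a N,
    fun ⟨x, y⟩ hp => h N x y hp.2 ((hR _ hp.1).trans hN)⟩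

/-- A short pair crossing the `k`-th shell forces `k ≤ N`. -/
lemma mem_ballUnion_of_shell [MetricSpace X] {a : ℕ → X} {N k : ℕ} {x y : X}
    (hxy : dist x y ≤ N) (hx : dist x (a k) < k) (hy : 2 * k ≤ dist y (a k)) :
    x ∈ ballUnion a N ∧ y ∈ ballUnion a N := by
  have h := dist_triangle_left y (a k) x
  have hk : (k : ℝ) ≤ N := by linarith
  exact ⟨mem_ballUnion hk (by linarith), mem_ballUnion hk (by linarith)⟩

lemma isCoarseCover_sepCover [MetricSpace X] (a : ℕ → X) : IsCoarseCover (sepCover a) := by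
  refine isCoentourage_of_ballUnion a _ fun N x y hC hxy => ?_
  simp only [Set.mem_compl_iff, Set.mem_iUnion, not_exists, Set.mem_prod] at hC
  have h0 : ¬ ((∀ k : ℕ, (k : ℝ) ≤ dist x (a k)) ∧ ∀ k : ℕ, (k : ℝ) ≤ dist y (a k)) := hC 0
  have h1 : ¬ ((∃ k : ℕ, dist x (a k) < 2 * k) ∧ ∃ k : ℕ, dist y (a k) < 2 * k) := hC 1
  rw [not_and_or] at h0
  push Not at h0 h1
  rcases h0 with ⟨k, hk⟩ | ⟨k, hk⟩
  · have hk0 : (0 : ℝ) ≤ k := k.cast_nonneg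
    exact mem_ballUnion_of_shell hxy hk (h1 ⟨k, by linarith⟩ k)
  · have hk0 : (0 : ℝ) ≤ k := k.cast_nonneg
    have hx : 2 * (k : ℝ) ≤ dist x (a k) := by
      by_contra! hlt
      have := h1 ⟨k, hlt⟩ k
      linarith
    exact (mem_ballUnion_of_shell (by rwa [dist_comm]) hk hx).symm

lemma coarseStar_sepCover_subset [MetricSpace X] (a : ℕ → X) (S : Set X)
    (hS : ∀ s ∈ S, ∀ k : ℕ, 4 * k < dist s (a k)) :
    coarseStar S (sepCover a) ⊆ {x | ∀ k : ℕ, (k : ℝ) ≤ dist x (a k)} := by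
  refine Set.iUnion₂_subset fun i hi => ?_
  fin_cases i
  · exact subset_rfl
  · refine absurd (isCoentourage_of_ballUnion a _ fun N s y hC hsy => ?_) hi
    obtain ⟨hs, k, hk⟩ : s ∈ S ∧ ∃ k : ℕ, dist y (a k) < 2 * k := hC
    have h := dist_triangle s y (a k)
    have h4 := hS s hs k
    have hk0 : (0 : ℝ) ≤ k := k.cast_nonneg
    have hkN : (k : ℝ) ≤ N := by linarith
    exact ⟨mem_ballUnion hkN (by linarith), mem_ballUnion hkN (by linarith)⟩

lemma exists_far_of_not_sameEnd [MetricSpace X] {φ ψ : ℕ → X} (h : ¬ SameEnd φ ψ) (C : ℝ) :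
    ∃ n, ∀ m, C < dist (ψ m) (φ n) := by
  by_contra! hc
  refine h ⟨{p | p.2 ∈ Set.range φ ∧ dist p.1 p.2 ≤ C}, ⟨C, fun p hp => hp.2⟩, ?_⟩
  ext y
  constructor
  · rintro ⟨_, _, hy, _⟩
    exact hy
  · rintro ⟨n, rfl⟩
    obtain ⟨m, hm⟩ := hc n
    exact ⟨ψ m, ⟨m, rfl⟩, ⟨n, rfl⟩, hm⟩

lemma exists_separating_cover_s17 [MetricSpace X] {φ ψ : ℕ → X} (h : ¬ SameEnd φ ψ) :
    ∃ U : Fin 2 → Set X, IsCoarseCover U ∧ ¬ inUNbhd U φ ψ := by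
  choose n hn using fun k : ℕ => exists_far_of_not_sameEnd h (4 * k)
  refine ⟨sepCover fun k => φ (n k), isCoarseCover_sepCover _, ?_⟩
  rintro ⟨E, ⟨R, hR⟩, -, hE⟩
  obtain ⟨k, hk⟩ := exists_nat_gt R
  obtain ⟨x, hx, hxE⟩ := hE ⟨n k, rfl⟩
  have hfar : (k : ℝ) ≤ dist x (φ (n k)) :=
    coarseStar_sepCover_subset (fun k => φ (n k)) (Set.range ψ)
      (by rintro _ ⟨m, rfl⟩ k; exact hn k m) hx k
  have hnear : dist x (φ (n k)) ≤ R := hR _ hxE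
  linarith

/-- the uniformity on the space of ends is separated. -/
theorem soe_separated [MetricSpace X] :
    -- distinct endpoints are separated by some coarse cover
    (∀ φ ψ : ℕ → X, IsCoarseMap φ → IsCoarseMap ψ → ¬ SameEnd φ ψ →
      ∃ (n : ℕ) (U : Fin n → Set X), IsCoarseCover U ∧ ¬ inUNbhd U φ ψ) ∧
    -- hence the intersection of all D_𝒰 is the diagonal
    (∀ φ ψ : ℕ → X, IsCoarseMap φ → IsCoarseMap ψ →
      (∀ (ι : Type) [Fintype ι] (U : ι → Set X), IsCoarseCover U → inUNbhd U φ ψ) →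
      SameEnd φ ψ) := by
  refine ⟨fun φ ψ _ _ h => ⟨2, exists_separating_cover_s17 h⟩, fun φ ψ _ _ hall => ?_⟩
  by_contra h
  obtain ⟨U, hU, hn⟩ := exists_separating_cover_s17 h
  exact hn (hall (Fin 2) U hU)
end
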